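/- Let M_ε and M_μ be real symmetric n×n matrices, let C be a real n×n matrix, and let Δt > 0. Suppose M_ε and M_μ are invertible, and let (e_m)_{m≥0} and (h_{m+1/2})_{m≥0} be sequences in ℝⁿ satisfying the source-free Leapfrog updates e_{m+1} = e_m + Δt·M_ε⁻¹·(Cᵀ·h_{m+1/2}) and h_{m+3/2} = h_{m+1/2} − Δt·M_μ⁻¹·(C·e_{m+1}) for all m ≥ 0. Define the interpolated values e_{m+1/2} := (e_m + e_{m+1})/2 and h_{m+1} := (h_{m+1/2} + h_{m+3/2})/2. Then for every m ≥ 0, e_{m+1}ᵀ·M_ε·e_{m+3/2} + h_{m+1}ᵀ·M_μ·h_{m+3/2} = e_mᵀ·M_ε·e_{m+1/2} + h_mᵀ·M_μ·h_{m+1/2}, where for m ≥ 1 the value h_m := (h_{m−1/2} + h_{m+1/2})/2 and the identity at m = 0 is interpreted with a given initial averaged value h_0 consistent with the scheme (equivalently, the identity holds for all m ≥ 1). -/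

import Mathlib

/-! Applying `Mε` and `Mμ` to the updates removes the inverses:
`Mε (e (m+1) - e m) = Δt • Cᵀ (h m)` and `Mμ (h (m+1) - h m) = -Δt • C (e (m+1))`.
Since `Mε` and `Mμ` are symmetric, the change of each energy over one step is a combination of
these increments tested against `e` or `h`. Since `C` and `Cᵀ` are mutually adjoint, the
coupling terms `h i ⬝ᵥ C (e j)` coming from the two energies cancel. -/

open scoped Matrix

theorem dotProduct_mulVec_comm_transpose {n : ℕ} (A : Matrix (Fin n) (Fin n) ℝ)
    (u v : Fin n → ℝ) : u ⬝ᵥ A *ᵥ v = v ⬝ᵥ Aᵀ *ᵥ u := by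
  rw [Matrix.dotProduct_mulVec, Matrix.mulVec_transpose, dotProduct_comm]

/-- Discrete energy conservation (eq. (18)) of the source-free Leapfrog scheme on
staggered time grids: with the midpoint interpolations
`e_{m+1/2} = (e_m + e_{m+1})/2` and `h_m = (h_{m−1/2} + h_{m+1/2})/2`, the discrete
electromagnetic energy `e_{m}ᵀ M_ε e_{m+1/2} + h_{m}ᵀ M_μ h_{m+1/2}` is conserved.
Here `h m` denotes the magnetic voltages at the half-integer time point `t_{m+1/2}`. -/
theorem leapfrog_discrete_energy_conservation
    (n : ℕ) (Mε Mμ : Matrix (Fin n) (Fin n) ℝ)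
    (hMε : Mεᵀ = Mε) (hMμ : Mμᵀ = Mμ)
    [Invertible Mε] [Invertible Mμ]
    (C : Matrix (Fin n) (Fin n) ℝ) (Δt : ℝ) (hΔt : 0 < Δt)
    (e h : ℕ → Fin n → ℝ)
    (he : ∀ m : ℕ, e (m + 1) = e m + Δt • Mε⁻¹.mulVec (Cᵀ.mulVec (h m)))
    (hh : ∀ m : ℕ, h (m + 1) = h m - Δt • Mμ⁻¹.mulVec (C.mulVec (e (m + 1)))) :
    ∀ m : ℕ, 1 ≤ m →
      (e (m + 1)) ⬝ᵥ Mε.mulVec ((e (m + 1) + e (m + 2)) / 2) +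
        ((h m + h (m + 1)) / 2) ⬝ᵥ Mμ.mulVec (h (m + 1)) =
      (e m) ⬝ᵥ Mε.mulVec ((e m + e (m + 1)) / 2) +
        ((h (m - 1) + h m) / 2) ⬝ᵥ Mμ.mulVec (h m) := by
  -- Shift the index so that `m - 1` is an honest predecessor.
  rintro m hm
  obtain ⟨k, rfl⟩ : ∃ k, m = k + 1 := ⟨m - 1, by omega⟩
  simp only [Nat.add_sub_cancel]
  have hE : ∀ j, Mε *ᵥ e (j + 1) = Mε *ᵥ e j + Δt • (Cᵀ *ᵥ h j) := fun j => by
    rw [he j, Matrix.mulVec_add, Matrix.mulVec_smul, Matrix.mulVec_mulVec,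
      Matrix.mul_inv_of_invertible, Matrix.one_mulVec]
  have hH : ∀ j, Mμ *ᵥ h (j + 1) = Mμ *ᵥ h j - Δt • (C *ᵥ e (j + 1)) := fun j => by
    rw [hh j, Matrix.mulVec_sub, Matrix.mulVec_smul, Matrix.mulVec_mulVec,
      Matrix.mul_inv_of_invertible, Matrix.one_mulVec]
  have hC : ∀ u v : Fin n → ℝ, u ⬝ᵥ Cᵀ *ᵥ v = v ⬝ᵥ C *ᵥ u := fun u v => by
    simpa using dotProduct_mulVec_comm_transpose Cᵀ u v
  have hsε : ∀ u v : Fin n → ℝ, u ⬝ᵥ Mε *ᵥ v = v ⬝ᵥ Mε *ᵥ u := fun u v => by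
    simpa [hMε] using dotProduct_mulVec_comm_transpose Mε u v
  have hsμ : ∀ u v : Fin n → ℝ, u ⬝ᵥ Mμ *ᵥ v = v ⬝ᵥ Mμ *ᵥ u := fun u v => by
    simpa [hMμ] using dotProduct_mulVec_comm_transpose Mμ u v
  -- The update laws in tested form.
  have tE : ∀ (u : Fin n → ℝ) (j : ℕ), u ⬝ᵥ Mε *ᵥ e (j + 1) =
      u ⬝ᵥ Mε *ᵥ e j + Δt * (h j ⬝ᵥ C *ᵥ u) := fun u j => by
    rw [hE, dotProduct_add, dotProduct_smul, hC, smul_eq_mul]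
  have tH : ∀ (u : Fin n → ℝ) (j : ℕ), u ⬝ᵥ Mμ *ᵥ h (j + 1) =
      u ⬝ᵥ Mμ *ᵥ h j - Δt * (u ⬝ᵥ C *ᵥ e (j + 1)) := fun u j => by
    rw [hH, dotProduct_sub, dotProduct_smul, smul_eq_mul]
  have half : ∀ u : Fin n → ℝ, u / 2 = (2⁻¹ : ℝ) • u := fun u => by
    ext i
    simp [div_eq_inv_mul]
  simp only [half, Matrix.mulVec_smul, Matrix.mulVec_add, dotProduct_smul, smul_dotProduct,
    dotProduct_add, add_dotProduct, smul_eq_mul]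
  -- With `a, b, c` three consecutive electric states and `p, q, r` three consecutive magnetic
  -- states, twice the electric gain is `b·Mε(c - b) + b·Mε(b - a) + (a + b)·Mε(b - a)` and twice
  -- the magnetic gain is `(q + r)·Mμ(r - q) + q·Mμ(r - q) + q·Mμ(q - p)`.
  linear_combination
    (1 / 2) * (tE (e (k + 2)) (k + 2) + 2 * tE (e (k + 2)) (k + 1) + tE (e (k + 1)) (k + 1)
      + tH (h (k + 2)) (k + 1) + 2 * tH (h (k + 1)) (k + 1) + tH (h (k + 1)) k
      - 2 * hsε (e (k + 1)) (e (k + 2)) + hsμ (h (k + 2)) (h (k + 1))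
      + hsμ (h (k + 1)) (h k))
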